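/- arXiv:1906.04785 — 2 statements merged into one kernel-verified Lean document; each statement's English description precedes it below -/
import Mathlib

section
/- Let ν ∈ ℝ and μ ∈ ℝ with μ > |ν|. Then ∫₀^∞ x^{μ−1} K_ν(x) dx = 2^{μ−2} Γ((μ − ν)/2) Γ((μ + ν)/2), where K_ν(x) = ∫₀^∞ e^{−x cosh t} cosh(νt) dt and Γ is the Gamma function. -/
open MeasureTheory

/-- The modified Bessel function of the second kind,
`K_ν(x) = ∫₀^∞ e^{−x cosh t} cosh(νt) dt`. -/
noncomputable def besselK (ν x : ℝ) : ℝ :=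
  ∫ t in Set.Ioi (0 : ℝ), Real.exp (-(x * Real.cosh t)) * Real.cosh (ν * t)

lemma aux_beta {a b : ℝ} (ha : 0 < a) (hb : 0 < b) :
    ∫ x in Set.Ioo (0:ℝ) 1, x ^ (a - 1) * (1 - x) ^ (b - 1)
      = Real.Gamma a * Real.Gamma b / Real.Gamma (a + b) := by
  have h := Complex.betaIntegral_eq_Gamma_mul_div (a : ℂ) (b : ℂ) (by simpa) (by simpa)
  rw [Complex.betaIntegral, intervalIntegral.integral_of_le zero_le_one,
    integral_Ioc_eq_integral_Ioo, ← Complex.ofReal_add] at h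
  simp only [Complex.Gamma_ofReal] at h
  rw [← Complex.ofReal_inj]
  push_cast
  rw [← h, ← integral_complex_ofReal]
  refine setIntegral_congr_fun measurableSet_Ioo fun x hx => ?_
  have h1 : 0 ≤ 1 - x := by linarith [hx.2]
  rw [Complex.ofReal_mul, Complex.ofReal_cpow hx.1.le, Complex.ofReal_cpow h1]
  push_cast
  rfl

lemma aux_alg (ν μ t : ℝ) :
    |2 * (Real.sigmoid (2 * t) * (1 - Real.sigmoid (2 * t)))| •
      (Real.sigmoid (2 * t) ^ ((μ + ν) / 2 - 1) * (1 - Real.sigmoid (2 * t)) ^ ((μ - ν) / 2 - 1))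
      = 2 ^ (1 - μ) * (Real.exp (ν * t) * (1 / Real.cosh t) ^ μ) := by
  have hc := Real.cosh_pos t
  have e1 : Real.sigmoid (2 * t) = Real.exp t / (2 * Real.cosh t) := by
    rw [Real.sigmoid_def, Real.cosh_eq]
    rw [show -(2 * t) = -t + -t by ring, Real.exp_add, Real.exp_neg]
    have := Real.exp_pos t
    field_simp
  have e2 : 1 - Real.sigmoid (2 * t) = Real.exp (-t) / (2 * Real.cosh t) := by
    rw [e1]
    field_simp
    rw [Real.cosh_eq]; ring
  have p1 : 0 < Real.exp t / (2 * Real.cosh t) := by positivity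
  have p2 : 0 < Real.exp (-t) / (2 * Real.cosh t) := by positivity
  rw [e2, e1, abs_of_pos (by positivity), smul_eq_mul]
  have l1 : Real.log (Real.exp t / (2 * Real.cosh t)) = t - (Real.log 2 + Real.log (Real.cosh t)) := by
    rw [Real.log_div (by positivity) (by positivity), Real.log_exp, Real.log_mul (by positivity) (by positivity)]
  have l2 : Real.log (Real.exp (-t) / (2 * Real.cosh t)) = -t - (Real.log 2 + Real.log (Real.cosh t)) := by
    rw [Real.log_div (by positivity) (by positivity), Real.log_exp, Real.log_mul (by positivity) (by positivity)]
  rw [Real.rpow_sub_one p1.ne', Real.rpow_sub_one p2.ne', Real.rpow_sub two_pos, Real.rpow_one]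
  have : ∀ p q X Y : ℝ, p ≠ 0 → q ≠ 0 → 2 * (p * q) * (X / p * (Y / q)) = 2 * (X * Y) := by
    intro p q X Y hp hq
    field_simp
  rw [this _ _ _ _ p1.ne' p2.ne']
  rw [div_mul_eq_mul_div, mul_div_assoc]
  congr 1
  rw [Real.rpow_def_of_pos p1, Real.rpow_def_of_pos p2, Real.rpow_def_of_pos two_pos,
    Real.rpow_def_of_pos (by positivity), l1, l2, ← Real.exp_add, ← Real.exp_add, ← Real.exp_sub,
    one_div, Real.log_inv]
  congr 1
  ring

lemma aux_full {ν μ : ℝ} (h : |ν| < μ) :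
    Integrable (fun t : ℝ => Real.exp (ν * t) * (1 / Real.cosh t) ^ μ) ∧
    ∫ t : ℝ, Real.exp (ν * t) * (1 / Real.cosh t) ^ μ
      = 2 ^ (μ - 1) * (Real.Gamma ((μ - ν) / 2) * Real.Gamma ((μ + ν) / 2) / Real.Gamma μ) := by
  obtain ⟨h1, h2⟩ := abs_lt.1 h
  have hμ : 0 < μ := (abs_nonneg ν).trans_lt h
  have ha : 0 < (μ - ν) / 2 := by linarith
  have hb : 0 < (μ + ν) / 2 := by linarith
  have hd : ∀ x ∈ (Set.univ : Set ℝ), HasDerivWithinAt (fun t => Real.sigmoid (2 * t))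
      (2 * (Real.sigmoid (2 * x) * (1 - Real.sigmoid (2 * x)))) Set.univ x := by
    intro x _
    have := (Real.hasDerivAt_sigmoid (2 * x)).comp x ((hasDerivAt_id x).const_mul 2)
    rw [mul_one, mul_comm] at this
    exact this.hasDerivWithinAt
  have hinj : Set.InjOn (fun t => Real.sigmoid (2 * t)) Set.univ := by
    intro x _ y _ hxy
    have := Real.sigmoid_injective hxy
    linarith
  have himg : (fun t => Real.sigmoid (2 * t)) '' Set.univ = Set.Ioo 0 1 := by
    rw [← Real.range_sigmoid, Set.image_univ]
    ext y
    constructor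
    · rintro ⟨t, rfl⟩; exact ⟨2 * t, rfl⟩
    · rintro ⟨t, rfl⟩; exact ⟨t / 2, by simp only; congr 1; ring⟩
  have key := integral_image_eq_integral_abs_deriv_smul MeasurableSet.univ hd hinj
    (fun x : ℝ => x ^ ((μ + ν) / 2 - 1) * (1 - x) ^ ((μ - ν) / 2 - 1))
  rw [himg, aux_beta hb ha] at key
  simp only [aux_alg, setIntegral_univ] at key
  rw [integral_const_mul, show (μ + ν) / 2 + (μ - ν) / 2 = μ by ring] at key
  have hval : ∫ t : ℝ, Real.exp (ν * t) * (1 / Real.cosh t) ^ μ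
      = 2 ^ (μ - 1) * (Real.Gamma ((μ - ν) / 2) * Real.Gamma ((μ + ν) / 2) / Real.Gamma μ) := by
    rw [mul_comm (Real.Gamma _), key, ← mul_assoc, ← Real.rpow_add two_pos]
    simp
  refine ⟨.of_integral_ne_zero ?_, hval⟩
  rw [hval]
  have := Real.Gamma_pos_of_pos ha
  have := Real.Gamma_pos_of_pos hb
  have := Real.Gamma_pos_of_pos hμ
  positivity

lemma aux_half {ν μ : ℝ} (h : |ν| < μ) :
    IntegrableOn (fun t : ℝ => Real.cosh (ν * t) * (1 / Real.cosh t) ^ μ) (Set.Ioi 0) ∧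
    ∫ t in Set.Ioi (0:ℝ), Real.cosh (ν * t) * (1 / Real.cosh t) ^ μ
      = 2 ^ (μ - 2) * (Real.Gamma ((μ - ν) / 2) * Real.Gamma ((μ + ν) / 2) / Real.Gamma μ) := by
  obtain ⟨i1, v1⟩ := aux_full h
  obtain ⟨i2, v2⟩ := aux_full (ν := -ν) (μ := μ) (by rwa [abs_neg])
  have e : (fun t : ℝ => Real.cosh (ν * t) * (1 / Real.cosh t) ^ μ) = fun t =>
      (1 / 2) * (Real.exp (ν * t) * (1 / Real.cosh t) ^ μ + Real.exp (-ν * t) * (1 / Real.cosh t) ^ μ) := by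
    ext t
    rw [Real.cosh_eq (ν * t), neg_mul]; ring
  have ii : Integrable (fun t : ℝ => Real.cosh (ν * t) * (1 / Real.cosh t) ^ μ) := by
    rw [e]; exact (i1.add i2).const_mul _
  refine ⟨ii.integrableOn, ?_⟩
  have hA := integral_comp_abs (f := fun t : ℝ => Real.cosh (ν * t) * (1 / Real.cosh t) ^ μ)
  have hB : (fun t : ℝ => Real.cosh (ν * |t|) * (1 / Real.cosh |t|) ^ μ) =
      fun t => Real.cosh (ν * t) * (1 / Real.cosh t) ^ μ := by
    ext t
    rcases abs_cases t with ⟨h, _⟩ | ⟨h, _⟩ <;> simp [h]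
  rw [hB] at hA
  have hC : ∫ t : ℝ, Real.cosh (ν * t) * (1 / Real.cosh t) ^ μ =
      2 ^ (μ - 1) * (Real.Gamma ((μ - ν) / 2) * Real.Gamma ((μ + ν) / 2) / Real.Gamma μ) := by
    rw [e, integral_const_mul, integral_add i1 i2, v1, v2, sub_neg_eq_add, ← sub_eq_add_neg]
    ring
  have hp : (2:ℝ) ^ (μ - 1) = 2 * 2 ^ (μ - 2) := by
    rw [show μ - 1 = 1 + (μ - 2) by ring, Real.rpow_add two_pos, Real.rpow_one]
  rw [hC, hp] at hA
  linarith

/-- Mellin transform of the modified Bessel function of the second kind: for `μ > |ν|`,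
`∫₀^∞ x^{μ−1} K_ν(x) dx = 2^{μ−2} Γ((μ − ν)/2) Γ((μ + ν)/2)`. -/
theorem mellin_besselK
    (ν μ : ℝ) (h : |ν| < μ) :
    ∫ x in Set.Ioi (0 : ℝ), x ^ (μ - 1) * besselK ν x
      = 2 ^ (μ - 2) * Real.Gamma ((μ - ν) / 2) * Real.Gamma ((μ + ν) / 2) := by
  have hμ : 0 < μ := (abs_nonneg ν).trans_lt h
  obtain ⟨ih, vh⟩ := aux_half h
  have hG := Real.Gamma_pos_of_pos hμ
  set F : ℝ → ℝ → ℝ := fun x t =>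
    x ^ (μ - 1) * (Real.exp (-(x * Real.cosh t)) * Real.cosh (ν * t)) with hF
  have hFe : ∀ t, (fun x => F x t) =
      fun x => (x ^ (μ - 1) * Real.exp (-(Real.cosh t * x))) * Real.cosh (ν * t) := by
    intro t; ext x; simp only [hF, mul_comm x]; ring
  have hin : ∀ t, ∫ x in Set.Ioi (0:ℝ), F x t
      = Real.Gamma μ * (Real.cosh (ν * t) * (1 / Real.cosh t) ^ μ) := by
    intro t
    rw [hFe, integral_mul_const, Real.integral_rpow_mul_exp_neg_mul_Ioi hμ (Real.cosh_pos t)]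
    ring
  have hint : Integrable (Function.uncurry F)
      ((volume.restrict (Set.Ioi 0)).prod (volume.restrict (Set.Ioi 0))) := by
    have hm : Measurable (Function.uncurry F) := by
      simp only [hF, Function.uncurry_def]
      fun_prop
    rw [integrable_prod_iff' hm.aestronglyMeasurable]
    constructor
    · refine Filter.Eventually.of_forall fun t => .of_integral_ne_zero ?_
      simp only [Function.uncurry]
      rw [hin]
      have := Real.cosh_pos t
      have := Real.cosh_pos (ν * t)
      positivity
    · refine (ih.const_mul (Real.Gamma μ)).congr (Filter.Eventually.of_forall fun t => ?_)
      simp only [Function.uncurry]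
      rw [← hin]
      refine setIntegral_congr_fun measurableSet_Ioi fun x hx => ?_
      have hx' : 0 < x := hx
      have := Real.cosh_pos (ν * t)
      exact (Real.norm_of_nonneg (by simp only [hF]; positivity)).symm
  have hL : ∀ x, x ^ (μ - 1) * besselK ν x = ∫ t in Set.Ioi (0:ℝ), F x t := by
    intro x
    rw [besselK, ← integral_const_mul]
  simp only [hL]
  rw [integral_integral_swap hint]
  simp only [hin]
  rw [integral_const_mul, vh]
  field_simp
end

section
/- For every ν ∈ ℝ, I_ν(x) · √(2πx) · e^{−x} → 1 as x → ∞, where I_ν(x) = Σ_{k=0}^∞ (x/2)^{2k+ν}/(k! Γ(k + ν + 1)); that is, I_ν(x) ∼ e^x/√(2πx) as x → ∞. -/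
open MeasureTheory

/-- The modified Bessel function of the first kind,
`I_ν(x) = Σ_{k=0}^∞ (x/2)^{2k+ν}/(k! Γ(k + ν + 1))`. -/
noncomputable def besselI (ν x : ℝ) : ℝ :=
  ∑' k : ℕ, (x / 2) ^ (2 * (k : ℝ) + ν) / ((k.factorial : ℝ) * Real.Gamma ((k : ℝ) + ν + 1))

open Real Set Filter Topology

namespace BesselAux

lemma hasSum_of_eq' {f g : ℕ → ℝ} {c : ℝ} (h : ∀ k, f k = g k) (hg : HasSum g c) : HasSum f c := by
  rwa [funext h]

lemma beta_real {p q : ℝ} (hp : 0 < p) (hq : 0 < q) :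
    ∫ u in (0:ℝ)..1, u ^ (p - 1) * (1 - u) ^ (q - 1) =
      Real.Gamma p * Real.Gamma q / Real.Gamma (p + q) := by
  have h := ProbabilityTheory.beta_eq_betaIntegralReal p q hp hq
  rw [ProbabilityTheory.beta] at h
  rw [h, Complex.betaIntegral]
  have : ∫ x in (0:ℝ)..1, (x : ℂ) ^ ((p : ℂ) - 1) * (1 - (x : ℂ)) ^ ((q : ℂ) - 1)
      = ∫ x in (0:ℝ)..1, ((x ^ (p - 1) * (1 - x) ^ (q - 1) : ℝ) : ℂ) := by
    apply intervalIntegral.integral_congr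
    intro x hx
    rw [uIcc_of_le zero_le_one] at hx
    simp only
    push_cast
    rw [Complex.ofReal_cpow hx.1, Complex.ofReal_cpow (by linarith [hx.2])]
    push_cast
    rfl
  rw [this, intervalIntegral.integral_ofReal, Complex.ofReal_re]

lemma moment (k : ℕ) {a : ℝ} (ha : 0 ≤ a) :
    ∫ t in (0:ℝ)..1, t ^ (2 * k) * (1 - t ^ 2) ^ a =
      (1 / 2) * (Real.Gamma (k + 1 / 2) * Real.Gamma (a + 1) / Real.Gamma (k + a + 3 / 2)) := by
  have hb := beta_real (p := k + 1 / 2) (q := a + 1) (by positivity) (by positivity)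
  rw [show (k : ℝ) + 1 / 2 + (a + 1) = k + a + 3 / 2 by ring] at hb
  rw [← hb, intervalIntegral.integral_of_le zero_le_one, intervalIntegral.integral_of_le zero_le_one]
  set g : ℝ → ℝ := fun u => u ^ ((k : ℝ) + 1 / 2 - 1) * (1 - u) ^ (a + 1 - 1) with hg
  have h1 := integral_comp_rpow_Ioi_of_pos (g := (Ioc (0:ℝ) 1).indicator g) (p := 2) two_pos
  rw [setIntegral_indicator measurableSet_Ioc,
    inter_eq_self_of_subset_right Ioc_subset_Ioi_self] at h1
  rw [← h1, ← integral_const_mul]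
  have hI : Ioc (0:ℝ) 1 = Ioi 0 ∩ Ioc 0 1 :=
    (inter_eq_self_of_subset_right Ioc_subset_Ioi_self).symm
  rw [show ∫ x in Ioc (0:ℝ) 1, x ^ (2 * k) * (1 - x ^ 2) ^ a =
    ∫ x in Ioi (0:ℝ) ∩ Ioc 0 1, x ^ (2 * k) * (1 - x ^ 2) ^ a by rw [← hI],
    ← setIntegral_indicator measurableSet_Ioc]
  apply setIntegral_congr_fun measurableSet_Ioi
  intro t ht
  have ht : 0 < t := ht
  simp only [indicator, mem_Ioc, rpow_two, smul_eq_mul]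
  have e : (0 < t ^ 2 ∧ t ^ 2 ≤ 1) ↔ (0 < t ∧ t ≤ 1) := by
    constructor
    · intro h; exact ⟨ht, by nlinarith⟩
    · intro h; exact ⟨by positivity, by nlinarith⟩
  by_cases h : 0 < t ∧ t ≤ 1
  · rw [if_pos h, if_pos (e.2 h), hg]
    simp only
    rw [show (2:ℝ) - 1 = 1 by norm_num, rpow_one, add_sub_cancel_right,
      ← rpow_natCast t 2, ← rpow_mul ht.le, ← rpow_natCast t (2 * k)]
    have : t ^ ((2 * k : ℕ) : ℝ) = t * t ^ (((2:ℕ) : ℝ) * ((k:ℝ) + 1 / 2 - 1)) := by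
      nth_rewrite 2 [← rpow_one t]
      rw [← rpow_add ht]; congr 1; push_cast; ring
    rw [this]; ring
  · rw [if_neg h, if_neg (by rwa [e])]; simp

lemma gamma_half (k : ℕ) :
    Real.Gamma (k + 1 / 2) * (4 ^ k * k.factorial) = (2 * k).factorial * √π := by
  induction k with
  | zero => simp [-one_div, Real.Gamma_one_half_eq]
  | succ n ih =>
    have : ((n + 1 : ℕ) : ℝ) + 1 / 2 = (n + 1 / 2) + 1 := by push_cast; ring
    rw [this, Real.Gamma_add_one (by positivity), show 2 * (n + 1) = 2 * n + 1 + 1 by ring,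
      Nat.factorial_succ, Nat.factorial_succ, Nat.factorial_succ, pow_succ]
    push_cast
    linear_combination ((n:ℝ) + 1 / 2) * 4 * (n + 1) * ih

noncomputable def term (ν x : ℝ) (k : ℕ) : ℝ :=
  (x / 2) ^ (2 * (k : ℝ) + ν) / ((k.factorial : ℝ) * Real.Gamma ((k : ℝ) + ν + 1))

lemma hasSum_int {a x : ℝ} (ha : 0 ≤ a) :
    HasSum (fun k : ℕ => ∫ t in (0:ℝ)..1, (x ^ (2 * k) / (2 * k).factorial) *
        (t ^ (2 * k) * (1 - t ^ 2) ^ a))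
      (∫ t in (0:ℝ)..1, Real.cosh (x * t) * (1 - t ^ 2) ^ a) := by
  have hc : Continuous fun t : ℝ => (1 - t ^ 2) ^ a :=
    (by fun_prop : Continuous fun t : ℝ => 1 - t ^ 2).rpow_const (fun _ => Or.inr ha)
  apply intervalIntegral.hasSum_integral_of_dominated_convergence
    (bound := fun k _ => |x| ^ (2 * k) / (2 * k).factorial)
  · intro k
    exact (by fun_prop : Continuous _).aestronglyMeasurable
  · intro k
    refine ae_of_all _ fun t ht => ?_
    rw [uIoc_of_le zero_le_one] at ht
    have h0 : 0 ≤ 1 - t ^ 2 := by nlinarith [ht.1, ht.2]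
    have h1 : (1 - t ^ 2) ^ a ≤ 1 := rpow_le_one h0 (by nlinarith [ht.1]) ha
    have h2 : t ^ (2 * k) ≤ 1 := pow_le_one₀ ht.1.le ht.2
    have h3 : 0 ≤ t ^ (2 * k) := pow_nonneg ht.1.le _
    have h4 := rpow_nonneg h0 a
    rw [norm_mul, norm_div, norm_pow, Real.norm_eq_abs x, Real.norm_of_nonneg (mul_nonneg h3 h4),
      Real.norm_of_nonneg (by positivity : (0:ℝ) ≤ ((2 * k).factorial : ℝ))]
    exact mul_le_of_le_one_right (by positivity) (mul_le_one₀ h2 h4 h1)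
  · exact ae_of_all _ fun t _ => (Real.hasSum_cosh |x|).summable
  · exact intervalIntegrable_const
  · refine ae_of_all _ fun t _ => ?_
    have := (Real.hasSum_cosh (x * t)).mul_right ((1 - t ^ 2) ^ a)
    refine hasSum_of_eq' (fun k => ?_) this
    rw [mul_pow]; ring

lemma hasSum_term {ν x : ℝ} (hν : 1 / 2 ≤ ν) (hx : 0 < x) :
    HasSum (term ν x) ((x / 2) ^ ν * (2 / (√π * Real.Gamma (ν + 1 / 2))) *
      ∫ t in (0:ℝ)..1, Real.cosh (x * t) * (1 - t ^ 2) ^ (ν - 1 / 2)) := by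
  have h := (hasSum_int (a := ν - 1 / 2) (x := x) (by linarith)).mul_left
    ((x / 2) ^ ν * (2 / (√π * Real.Gamma (ν + 1 / 2))))
  refine hasSum_of_eq' (fun k => ?_) h
  rw [intervalIntegral.integral_const_mul, moment k (by linarith), term]
  have g := gamma_half k
  rw [show (k : ℝ) + (ν - 1 / 2) + 3 / 2 = k + ν + 1 by ring,
    show ν - 1 / 2 + 1 = ν + 1 / 2 by ring]
  have p1 : 0 < Real.Gamma (ν + 1 / 2) := Real.Gamma_pos_of_pos (by linarith)
  have p2 : 0 < Real.Gamma (k + ν + 1) := Real.Gamma_pos_of_pos (by positivity)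
  have p3 : 0 < √π := by positivity
  have p4 : (0:ℝ) < (2 * k).factorial := by positivity
  have p5 : (0:ℝ) < k.factorial := by positivity
  have g' : Real.Gamma (k + 1 / 2) = (2 * k).factorial * √π / (4 ^ k * k.factorial) := by
    rw [eq_div_iff (by positivity), g]
  rw [g', rpow_add (by positivity), show (2 * (k:ℝ)) = ((2 * k : ℕ) : ℝ) by push_cast; ring,
    rpow_natCast, div_pow, pow_mul 2 2 k]
  norm_num only
  field_simp

lemma recip (s : ℝ) : 1 / Real.Gamma s = s / Real.Gamma (s + 1) := by
  by_cases h : s = 0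
  · simp [h]
  · rw [Real.Gamma_add_one h]
    by_cases h2 : Real.Gamma s = 0
    · simp [h2]
    · field_simp

lemma hasSum_rec {ν x A B : ℝ} (hx : 0 < x) (h1 : HasSum (term ν x) A)
    (h2 : HasSum (term (ν + 1) x) B) : HasSum (term (ν - 1) x) (B + 2 * ν / x * A) := by
  have h3 : HasSum (fun k : ℕ => (k : ℝ) * ((x / 2) ^ (2 * (k : ℝ) + ν - 1) /
      ((k.factorial : ℝ) * Real.Gamma ((k : ℝ) + ν + 1)))) B := by
    rw [← hasSum_nat_add_iff' 1]
    simp only [Finset.range_one, Finset.sum_singleton, Nat.cast_zero, zero_mul, sub_zero]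
    refine hasSum_of_eq' (fun k => ?_) h2
    rw [term, Nat.factorial_succ]
    push_cast
    rw [show 2 * ((k:ℝ) + 1) + ν - 1 = 2 * k + (ν + 1) by ring,
      show (k:ℝ) + 1 + ν + 1 = k + (ν + 1) + 1 by ring]
    have : (k:ℝ) + 1 ≠ 0 := by positivity
    rw [← mul_div_assoc, mul_assoc ((k:ℝ) + 1), mul_div_mul_left _ _ this]
  refine hasSum_of_eq' (fun k => ?_) (h3.add (h1.mul_left (2 * ν / x)))
  rw [term, term, show (k:ℝ) + (ν - 1) + 1 = k + ν by ring]
  have e1 : (x / 2) ^ (2 * (k:ℝ) + ν) = (x / 2) ^ (2 * (k:ℝ) + ν - 1) * (x / 2) := by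
    nth_rewrite 3 [← rpow_one (x / 2)]
    rw [← rpow_add (by positivity)]; congr 1; ring
  have r := recip (k + ν)
  rw [e1, show 2 * (k:ℝ) + (ν - 1) = 2 * k + ν - 1 by ring, ← div_div, ← div_div, ← div_div,
    div_eq_mul_one_div _ (Real.Gamma (k + ν)), r]
  have hx' := hx.ne'
  field_simp

lemma laplace {a : ℝ} (ha : 0 ≤ a) :
    Tendsto (fun x : ℝ => x ^ (a + 1) * rexp (-x) *
      ∫ t in (0:ℝ)..1, Real.cosh (x * t) * (1 - t ^ 2) ^ a) atTop
      (𝓝 (2 ^ a / 2 * Real.Gamma (a + 1))) := by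
  have key : Tendsto (fun x : ℝ => ∫ s in Ioi (0:ℝ), (Ioc 0 x).indicator
      (fun s => (rexp (-s) + rexp (-(2 * x) + s)) / 2 * (s ^ a * (2 - s / x) ^ a)) s) atTop
      (𝓝 (∫ s in Ioi (0:ℝ), rexp (-s) / 2 * (s ^ a * 2 ^ a))) := by
    apply tendsto_integral_filter_of_dominated_convergence
      (bound := fun s => 2 ^ a * (rexp (-s) * s ^ (a + 1 - 1)))
    · refine Eventually.of_forall fun x => ?_
      apply Measurable.aestronglyMeasurable
      apply Measurable.indicator _ measurableSet_Ioc
      fun_prop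
    · filter_upwards [eventually_gt_atTop 0] with x hx
      refine (ae_restrict_iff' measurableSet_Ioi).2 (ae_of_all _ fun s hs => ?_)
      have hs : 0 < s := hs
      rw [indicator]
      split_ifs with h
      · have q : s / x ≤ 1 := (div_le_one hx).2 h.2
        have q0 : 0 ≤ s / x := by positivity
        have b1 : (2 - s / x) ^ a ≤ 2 ^ a := rpow_le_rpow (by linarith) (by linarith) ha
        have b0 : 0 ≤ (2 - s / x) ^ a := rpow_nonneg (by linarith) _
        have b2 : rexp (-(2 * x) + s) ≤ rexp (-s) := exp_le_exp.2 (by linarith [h.2])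
        rw [Real.norm_of_nonneg (by positivity), add_sub_cancel_right]
        calc _ ≤ (rexp (-s) + rexp (-s)) / 2 * (s ^ a * 2 ^ a) := by gcongr
          _ = _ := by ring
      · rw [norm_zero]; positivity
    · exact (Real.GammaIntegral_convergent (by positivity)).const_mul _
    · refine (ae_restrict_iff' measurableSet_Ioi).2 (ae_of_all _ fun s hs => ?_)
      have hs : 0 < s := hs
      have t1 : Tendsto (fun x : ℝ => rexp (-(2 * x) + s)) atTop (𝓝 0) := by
        apply tendsto_exp_atBot.comp
        apply tendsto_atBot_add_const_right
        exact tendsto_neg_atTop_atBot.comp (tendsto_id.const_mul_atTop two_pos)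
      have t2 : Tendsto (fun x : ℝ => (2 - s / x) ^ a) atTop (𝓝 (2 ^ a)) := by
        have : Tendsto (fun x : ℝ => 2 - s / x) atTop (𝓝 (2 - 0)) :=
          tendsto_const_nhds.sub (tendsto_const_nhds.div_atTop tendsto_id)
        rw [sub_zero] at this
        exact this.rpow_const (Or.inr ha)
      have t3 := ((t1.const_add (rexp (-s))).div_const 2).mul (t2.const_mul (s ^ a))
      rw [add_zero] at t3
      refine t3.congr' ?_
      filter_upwards [eventually_ge_atTop s] with x hx
      have hm : s ∈ Ioc 0 x := ⟨hs, hx⟩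
      rw [indicator_of_mem hm]
  have val : ∫ s in Ioi (0:ℝ), rexp (-s) / 2 * (s ^ a * 2 ^ a) = 2 ^ a / 2 * Real.Gamma (a + 1) := by
    rw [Real.Gamma_eq_integral (by positivity), ← integral_const_mul]
    congr 1; ext s; rw [add_sub_cancel_right]; ring
  rw [val] at key
  refine key.congr' ?_
  filter_upwards [eventually_gt_atTop 0] with x hx
  rw [setIntegral_indicator measurableSet_Ioc,
    inter_eq_self_of_subset_right Ioc_subset_Ioi_self, ← intervalIntegral.integral_of_le hx.le]
  have sub := intervalIntegral.integral_comp_sub_mul (a := 0) (b := 1)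
    (fun s => (rexp (-s) + rexp (-(2 * x) + s)) / 2 * (s ^ a * (2 - s / x) ^ a)) hx.ne' x
  simp only [mul_one, mul_zero, sub_zero, sub_self, smul_eq_mul] at sub
  rw [eq_comm, inv_mul_eq_iff_eq_mul₀ hx.ne'] at sub
  rw [sub, ← intervalIntegral.integral_const_mul, ← intervalIntegral.integral_const_mul]
  apply intervalIntegral.integral_congr
  intro t ht
  rw [uIcc_of_le zero_le_one] at ht
  have ht1 : 0 ≤ 1 - t := by linarith [ht.2]
  have ht2 : 0 ≤ 1 + t := by linarith [ht.1]
  simp only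
  rw [show x - x * t = x * (1 - t) by ring, mul_div_cancel_left₀ _ hx.ne',
    show 2 - (1 - t) = 1 + t by ring, mul_rpow hx.le ht1, Real.cosh_eq,
    show 1 - t ^ 2 = (1 - t) * (1 + t) by ring, mul_rpow ht1 ht2, rpow_add hx, rpow_one,
    show -(x * (1 - t)) = -x + x * t by ring, show -(2 * x) + x * (1 - t) = -x + -(x * t) by ring,
    exp_add, exp_add]
  ring

def P (ν : ℝ) : Prop := (∀ x : ℝ, 0 < x → Summable (term ν x)) ∧
  Tendsto (fun x : ℝ => (∑' k, term ν x k) * √(2 * π * x) * rexp (-x)) atTop (𝓝 1)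

lemma P_base {ν : ℝ} (hν : 1 / 2 ≤ ν) : P ν := by
  refine ⟨fun x hx => (hasSum_term hν hx).summable, ?_⟩
  have hg : 0 < Real.Gamma (ν + 1 / 2) := Real.Gamma_pos_of_pos (by linarith)
  have h := (laplace (a := ν - 1 / 2) (by linarith)).const_mul
    (2 / 2 ^ ν * √2 / Real.Gamma (ν + 1 / 2))
  rw [show ν - 1 / 2 + 1 = ν + 1 / 2 by ring] at h
  have e : 2 / 2 ^ ν * √2 / Real.Gamma (ν + 1 / 2) *
      (2 ^ (ν - 1 / 2) / 2 * Real.Gamma (ν + 1 / 2)) = 1 := by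
    rw [rpow_sub two_pos, ← sqrt_eq_rpow]
    field_simp
  rw [e] at h
  refine h.congr' ?_
  filter_upwards [eventually_gt_atTop 0] with x hx
  rw [(hasSum_term hν hx).tsum_eq, div_rpow hx.le two_pos.le, rpow_add hx, ← sqrt_eq_rpow,
    sqrt_mul (by positivity), sqrt_mul (by positivity)]
  have : 0 < √π := by positivity
  field_simp

lemma P_step {ν : ℝ} (h1 : P ν) (h2 : P (ν + 1)) : P (ν - 1) := by
  refine ⟨fun x hx => (hasSum_rec hx (h1.1 x hx).hasSum (h2.1 x hx).hasSum).summable, ?_⟩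
  have t : Tendsto (fun x : ℝ => 2 * ν / x) atTop (𝓝 0) :=
    tendsto_const_nhds.div_atTop tendsto_id
  have := h2.2.add (t.mul h1.2)
  rw [zero_mul, add_zero] at this
  refine this.congr' ?_
  filter_upwards [eventually_gt_atTop 0] with x hx
  rw [(hasSum_rec hx (h1.1 x hx).hasSum (h2.1 x hx).hasSum).tsum_eq]
  ring

lemma P_nat (n : ℕ) : ∀ ν : ℝ, 1 / 2 - n ≤ ν → P ν := by
  induction n with
  | zero => intro ν h; exact P_base (by simpa using h)
  | succ n ih =>
    intro ν h
    push_cast at h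
    have := P_step (ν := ν + 1) (ih _ (by linarith)) (ih _ (by linarith))
    simpa using this

end BesselAux

/-- The asymptotic behaviour `I_ν(x) ∼ e^x/√(2πx)` as `x → ∞`: for every `ν ∈ ℝ`,
`I_ν(x) √(2πx) e^{−x} → 1` as `x → ∞`. -/
theorem besselI_asymptotic (ν : ℝ) :
    Filter.Tendsto
      (fun x : ℝ => besselI ν x * Real.sqrt (2 * Real.pi * x) * Real.exp (-x))
      Filter.atTop (nhds 1) := by
  obtain ⟨n, hn⟩ := exists_nat_ge (1 / 2 - ν)
  exact (BesselAux.P_nat n ν (by linarith)).2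
end
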